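/- arXiv:2504.03575 — 2 statements merged into one kernel-verified Lean document; each statement's English description precedes it below -/
import Mathlib

section
/- (Hadwiger) Let 𝒞 be a convex body (compact convex set) in d-dimensional Euclidean space with volume Vol(𝒞). Then there exists a hyperrectangle P (a rotated and translated rectangular box, i.e. an image of a product of closed intervals under an isometry of ℝ^d) which covers 𝒞 (𝒞 ⊆ P) and whose volume satisfies Vol(P) ≤ d!·Vol(𝒞). -/
open MeasureTheory Matrix

/-- A hyperrectangle in `ℝ^d`: the image of an axis-parallel box `[a₁,b₁] × ⋯ × [a_d,b_d]`
under a rigid motion (a rotation `R ∈ SO(d)` followed by a translation by `t`). -/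
def IsHyperrectangle {d : ℕ} (P : Set (Fin d → ℝ)) : Prop :=
  ∃ (R : Matrix (Fin d) (Fin d) ℝ) (t a b : Fin d → ℝ),
    Rᵀ * R = 1 ∧ R.det = 1 ∧ a ≤ b ∧
    P = (fun x => R.mulVec x + t) '' Set.Icc a b

/-!
Take a longest chord of the convex body `C`, of length `r` and direction `v`, as an edge of the box:
the width of `C` in the direction `v` is at most `r`. The remaining edges come by induction from the
projection `π C` of `C` onto the orthogonal complement of `v`, so it suffices that
`r * vol (π C) ≤ d * vol C`. The chord projects to a single point `x₀`. By convexity, the image of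
`π C` under the homothety with centre `x₀` and ratio `1 - s` consists of points over which the
slice of `C` has length at least `s * r`; integrating the measures of these images, which are
`(1 - s) ^ (d - 1) * vol (π C)`, over `s * r` gives the volume of the pyramid with base `π C` and
height `r` as a lower bound for `vol C`.
-/

open Module Set
open scoped ENNReal RealInnerProductSpace

section Slices

variable {E : Type*}

theorem ofReal_mul_sub_le_volume_slice [AddCommGroup E] [Module ℝ E] {C : Set (ℝ × E)}
    (hC : Convex ℝ C) {t₀ t₁ t s : ℝ} {x₀ y : E} (h₀ : (t₀, x₀) ∈ C) (h₁ : (t₁, x₀) ∈ C)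
    (hy : (t, y) ∈ C) (hs : s ∈ Icc (0 : ℝ) 1) :
    ENNReal.ofReal (s * (t₁ - t₀)) ≤
      volume ((·, AffineMap.homothety x₀ (1 - s) y) ⁻¹' C) := by
  set x := AffineMap.homothety x₀ (1 - s) y
  have mem_slice (τ : ℝ) (hτ : (τ, x₀) ∈ C) : AffineMap.lineMap τ t (1 - s) ∈ (·, x) ⁻¹' C := by
    have := hC.lineMap_mem hτ hy (t := 1 - s) ⟨by linarith [hs.2], by linarith [hs.1]⟩
    rwa [← AffineMap.homothety_eq_lineMap] at this
  have slice_convex : Convex ℝ ((·, x) ⁻¹' C) :=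
    hC.affine_preimage ((AffineMap.id ℝ ℝ).prod (AffineMap.const ℝ ℝ x))
  calc ENNReal.ofReal (s * (t₁ - t₀))
      = volume (Icc (AffineMap.lineMap t₀ t (1 - s)) (AffineMap.lineMap t₁ t (1 - s))) := by
        rw [Real.volume_Icc]
        simp only [AffineMap.lineMap_apply_ring]
        congr 1
        ring
    _ ≤ volume ((·, x) ⁻¹' C) :=
        measure_mono (slice_convex.ordConnected.out (mem_slice t₀ h₀) (mem_slice t₁ h₁))

theorem lintegral_Ioc_one_sub_div_pow {D : ℝ} (hD : 0 < D) (n : ℕ) :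
    ∫⁻ t in Ioc 0 D, ENNReal.ofReal ((1 - t / D) ^ n) = ENNReal.ofReal (D / (n + 1)) := by
  rw [← ofReal_integral_eq_lintegral_ofReal, ← intervalIntegral.integral_of_le hD.le,
    intervalIntegral.integral_comp_sub_div (· ^ n) hD.ne']
  · simp [hD.ne', div_eq_mul_inv]
  · exact Continuous.integrableOn_Ioc (by fun_prop)
  · filter_upwards [ae_restrict_mem measurableSet_Ioc] with t ht
    exact pow_nonneg (sub_nonneg.2 <| div_le_one_of_le₀ ht.2 hD.le) n

theorem lintegral_measure_le_slice_eq_prod {α β : Type*} [MeasurableSpace α] [MeasurableSpace β]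
    {ν : Measure α} {μ : Measure β} [SFinite ν] [SFinite μ] {C : Set (α × β)}
    (hC : MeasurableSet C) (hfin : ∀ x, ν ((·, x) ⁻¹' C) ≠ ∞) :
    ∫⁻ t in Ioi 0, μ {x | t ≤ ν.real ((·, x) ⁻¹' C)} = (ν.prod μ) C := calc
  _ = ∫⁻ x, ENNReal.ofReal (ν.real ((·, x) ⁻¹' C)) ∂μ :=
    (lintegral_eq_lintegral_meas_le μ (.of_forall fun _ => measureReal_nonneg)
      (measurable_measure_prodMk_right hC).ennreal_toReal.aemeasurable).symm
  _ = (ν.prod μ) C := by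
    simp only [ofReal_measureReal (hfin _), Measure.prod_apply_symm hC]

variable [NormedAddCommGroup E] [NormedSpace ℝ E] [FiniteDimensional ℝ E] [MeasurableSpace E]
  [BorelSpace E]

theorem ofReal_sub_mul_measure_image_snd_le (μ : Measure E) [μ.IsAddHaarMeasure] {C : Set (ℝ × E)}
    (hcomp : IsCompact C) (hconv : Convex ℝ C) {t₀ t₁ : ℝ} {x₀ : E} (h₀ : (t₀, x₀) ∈ C)
    (h₁ : (t₁, x₀) ∈ C) :
    ENNReal.ofReal (t₁ - t₀) * μ (Prod.snd '' C) ≤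
      (finrank ℝ E + 1 : ℕ) * (volume.prod μ) C := by
  rcases le_or_gt t₁ t₀ with h | h
  · simp [ENNReal.ofReal_of_nonpos (sub_nonpos.2 h)]
  set n := finrank ℝ E
  set D := t₁ - t₀
  have hD : 0 < D := sub_pos.2 h
  have slice_ne_top (x : E) : volume ((·, x) ⁻¹' C) ≠ ∞ := by
    refine ne_top_of_le_ne_top (hcomp.image continuous_fst).measure_ne_top (measure_mono ?_)
    exact fun t ht => ⟨(t, x), ht, rfl⟩
  have homothety_subset {t : ℝ} (ht : t ∈ Ioc 0 D) :
      AffineMap.homothety x₀ (1 - t / D) '' (Prod.snd '' C) ⊆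
        {x | t ≤ volume.real ((·, x) ⁻¹' C)} := by
    rintro _ ⟨_, ⟨⟨τ, y⟩, hy, rfl⟩, rfl⟩
    have := ofReal_mul_sub_le_volume_slice hconv h₀ h₁ hy
      (s := t / D) ⟨by have := ht.1; positivity, div_le_one_of_le₀ ht.2 hD.le⟩
    rwa [div_mul_cancel₀ t hD.ne', ENNReal.ofReal_le_iff_le_toReal (slice_ne_top _)] at this
  have volume_ge : ENNReal.ofReal (D / (n + 1)) * μ (Prod.snd '' C) ≤ (volume.prod μ) C := calc
    _ = ∫⁻ t in Ioc 0 D, μ (AffineMap.homothety x₀ (1 - t / D) '' (Prod.snd '' C)) := by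
      rw [← lintegral_Ioc_one_sub_div_pow hD, ← lintegral_mul_const _ (by fun_prop)]
      refine setLIntegral_congr_fun measurableSet_Ioc fun t ht => ?_
      rw [Measure.addHaar_image_homothety, abs_of_nonneg]
      exact pow_nonneg (sub_nonneg.2 <| div_le_one_of_le₀ ht.2 hD.le) _
    _ ≤ ∫⁻ t in Ioc 0 D, μ {x | t ≤ volume.real ((·, x) ⁻¹' C)} :=
      setLIntegral_mono' measurableSet_Ioc fun t ht => measure_mono (homothety_subset ht)
    _ ≤ ∫⁻ t in Ioi 0, μ {x | t ≤ volume.real ((·, x) ⁻¹' C)} :=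
      lintegral_mono_set Ioc_subset_Ioi_self
    _ = (volume.prod μ) C :=
      lintegral_measure_le_slice_eq_prod hcomp.isClosed.measurableSet slice_ne_top
  calc ENNReal.ofReal D * μ (Prod.snd '' C)
      = (n + 1 : ℕ) * (ENNReal.ofReal (D / (n + 1)) * μ (Prod.snd '' C)) := by
        rw [← mul_assoc, ← ENNReal.ofReal_natCast, ← ENNReal.ofReal_mul (by positivity)]
        push_cast
        rw [mul_div_cancel₀ D (by positivity)]
    _ ≤ (n + 1 : ℕ) * (volume.prod μ) C := by gcongr

end Slices

section OrthogonalSplitting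

variable {E : Type*} [NormedAddCommGroup E] [InnerProductSpace ℝ E]

theorem exists_orthonormalBasis_eq_vecCons {n : ℕ}
    (hn : finrank ℝ E = n + 1) {v : E} (hv : ‖v‖ = 1)
    (b : OrthonormalBasis (Fin n) ℝ (ℝ ∙ v)ᗮ) :
    ∃ b' : OrthonormalBasis (Fin (n + 1)) ℝ E, ⇑b' = vecCons v fun i => (b i : E) := by
  have : FiniteDimensional ℝ E := .of_finrank_eq_succ hn
  have ortho : Orthonormal ℝ (vecCons v fun i => (b i : E)) :=
    orthonormal_vecCons_iff.2 ⟨hv, fun i => Submodule.mem_orthogonal_singleton_iff_inner_right.1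
      (b i).2, b.orthonormal.comp_linearIsometry (ℝ ∙ v)ᗮ.subtypeₗᵢ⟩
  obtain ⟨b', hb'⟩ := Orthonormal.exists_orthonormalBasis_extension_of_card_eq (s := univ)
    (by rw [hn, Fintype.card_fin]) (ortho.comp _ Subtype.val_injective)
  exact ⟨b', funext fun i => hb' i (mem_univ i)⟩

theorem exists_norm_eq_one_and_eq_norm_smul {F : Type*} [NormedAddCommGroup F] [NormedSpace ℝ F]
    [Nontrivial F] (x : F) : ∃ v : F, ‖v‖ = 1 ∧ x = ‖x‖ • v := by
  rcases eq_or_ne x 0 with rfl | hx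
  · simpa using exists_norm_eq F zero_le_one
  · exact ⟨‖x‖⁻¹ • x, norm_smul_inv_norm hx, (smul_inv_smul₀ (norm_ne_zero_iff.2 hx) x).symm⟩

variable [FiniteDimensional ℝ E] [MeasurableSpace E] [BorelSpace E]

theorem measurePreserving_inner_prod_orthogonalProjectionOnto {v : E} (hv : ‖v‖ = 1) :
    MeasurePreserving fun x => (⟪v, x⟫, (ℝ ∙ v)ᗮ.orthogonalProjectionOnto x) := by
  set e : ℝ ≃ₗᵢ[ℝ] (ℝ ∙ v) := LinearIsometryEquiv.toSpanUnitSingleton v hv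
  have inner_eq (x : E) : e.symm ((ℝ ∙ v).orthogonalProjectionOnto x) = ⟪v, x⟫ := by
    rw [LinearIsometryEquiv.symm_apply_eq]
    ext
    simpa [e] using Submodule.starProjection_unit_singleton ℝ hv x
  have preserving := (e.symm.measurePreserving.prod (.id volume)).comp <|
    (WithLp.volume_preserving_ofLp (ℝ ∙ v) (ℝ ∙ v)ᗮ).comp
      (ℝ ∙ v).orthogonalDecomposition.measurePreserving
  convert! preserving using 2 with x
  simp [inner_eq]

theorem ofReal_mul_volume_orthogonalProjectionOnto_image_le {C : Set E} (hcomp : IsCompact C)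
    (hconv : Convex ℝ C) {v p : E} (hv : ‖v‖ = 1) {r : ℝ} (hp : p ∈ C) (hr : p + r • v ∈ C) :
    ENNReal.ofReal r * volume ((ℝ ∙ v)ᗮ.orthogonalProjectionOnto '' C) ≤
      finrank ℝ E * volume C := by
  set K := (ℝ ∙ v)ᗮ
  set φ : E →L[ℝ] ℝ × K := (innerSL ℝ v).prod K.orthogonalProjectionOnto
  have φ_injective : Function.Injective φ := by
    refine (injective_iff_map_eq_zero φ).2 fun x hx => ?_
    obtain ⟨inner_eq_zero, proj_eq_zero⟩ : ⟪v, x⟫ = 0 ∧ K.orthogonalProjectionOnto x = 0 :=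
      Prod.mk.inj hx
    have x_mem : x ∈ K := Submodule.mem_orthogonal_singleton_iff_inner_right.2 inner_eq_zero
    simpa [proj_eq_zero] using (K.orthogonalProjectionOnto_mem_subspace_eq_self ⟨x, x_mem⟩).symm
  have φ_preserving : MeasurePreserving φ :=
    measurePreserving_inner_prod_orthogonalProjectionOnto hv
  have volume_image : volume (φ '' C) = volume C := by
    rw [← φ_preserving.measure_preimage
      (hcomp.image φ.continuous).isClosed.measurableSet.nullMeasurableSet,
      preimage_image_eq _ φ_injective]
  have map_end : φ (p + r • v) = (⟪v, p⟫ + r, K.orthogonalProjectionOnto p) := by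
    simp [φ, K, hv, inner_add_right, inner_smul_right,
      Submodule.orthogonalProjectionOnto_orthogonalComplement_singleton_eq_zero]
  have finrank_eq : finrank ℝ K + 1 = finrank ℝ E := by
    rw [← (ℝ ∙ v).finrank_add_finrank_orthogonal, finrank_span_singleton (by aesop), add_comm]
  have start_mem : (⟪v, p⟫, K.orthogonalProjectionOnto p) ∈ φ '' C := mem_image_of_mem φ hp
  have end_mem : (⟪v, p⟫ + r, K.orthogonalProjectionOnto p) ∈ φ '' C :=
    map_end ▸ mem_image_of_mem φ hr
  have := ofReal_sub_mul_measure_image_snd_le volume (hcomp.image φ.continuous)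
    (hconv.linear_image φ.toLinearMap) start_mem end_mem
  rwa [add_sub_cancel_left, finrank_eq, ← Measure.volume_eq_prod, volume_image, image_image] at this

end OrthogonalSplitting

section Width

variable {E : Type*} [NormedAddCommGroup E] [InnerProductSpace ℝ E]

/-- The width of `C` in the direction `u`: for a unit vector `u`, the diameter of the projection of
`C` onto the line spanned by `u`. It takes values in `ℝ≥0∞`, so that products of widths compare
directly with volumes. -/
noncomputable def width (C : Set E) (u : E) : ℝ≥0∞ :=
  Metric.ediam ((⟪u, ·⟫) '' C)

theorem width_neg (C : Set E) (u : E) : width C (-u) = width C u := by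
  have image_neg : (⟪-u, ·⟫) '' C = Neg.neg '' ((⟪u, ·⟫) '' C) := by
    simp only [image_image, inner_neg_left]
  have neg_isometry : Isometry (Neg.neg : ℝ → ℝ) := (LinearIsometryEquiv.neg ℝ).isometry
  rw [width, image_neg, neg_isometry.ediam_image, width]

theorem width_le_ediam (C : Set E) {u : E} (hu : ‖u‖ = 1) : width C u ≤ Metric.ediam C := by
  have lipschitz : LipschitzWith 1 (innerSL ℝ u) :=
    (innerSL ℝ u).lipschitz.weaken (by simp [← NNReal.coe_le_coe, hu])
  simpa only [ENNReal.coe_one, one_mul] using! lipschitz.ediam_image_le C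

theorem width_orthogonalProjectionOnto_image (K : Submodule ℝ E) [K.HasOrthogonalProjection]
    (C : Set E) (u : K) : width (K.orthogonalProjectionOnto '' C) u = width C (u : E) := by
  simp only [width, image_image, K.inner_orthogonalProjectionOnto_eq_of_mem_left]

theorem exists_edist_eq_ediam {X : Type*} [PseudoEMetricSpace X] {s : Set X} (hs : IsCompact s)
    (hne : s.Nonempty) : ∃ x ∈ s, ∃ y ∈ s, edist x y = Metric.ediam s := by
  obtain ⟨⟨x, y⟩, ⟨hx, hy⟩, hmax⟩ := (hs.prod hs).exists_isMaxOn (hne.prod hne)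
    (continuous_edist (α := X)).continuousOn
  exact ⟨x, hx, y, hy, (Metric.edist_le_ediam_of_mem hx hy).antisymm <|
    Metric.ediam_le fun a ha b hb => hmax (mk_mem_prod ha hb)⟩

end Width

theorem exists_orthonormalBasis_prod_width_le {n : ℕ} {E : Type*} [NormedAddCommGroup E]
    [InnerProductSpace ℝ E] [FiniteDimensional ℝ E] [MeasurableSpace E] [BorelSpace E]
    (hn : finrank ℝ E = n) {C : Set E} (hcomp : IsCompact C) (hconv : Convex ℝ C)
    (hne : C.Nonempty) :
    ∃ b : OrthonormalBasis (Fin n) ℝ E, ∏ i, width C (b i) ≤ (n.factorial : ℝ≥0∞) * volume C := by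
  induction n generalizing E with
  | zero =>
    have : Subsingleton E := finrank_zero_iff.1 hn
    let b : OrthonormalBasis (Fin 0) ℝ E := (stdOrthonormalBasis ℝ E).reindex (finCongr hn)
    have one_le_volume : 1 ≤ volume C := by
      rw [← b.volume_parallelepiped, hne.eq_univ]
      exact measure_mono (subset_univ _)
    exact ⟨b, by simpa using one_le_volume⟩
  | succ n ih =>
    have : Nontrivial E := nontrivial_of_finrank_eq_succ hn
    obtain ⟨p, hp, q, hq, hpq⟩ := exists_edist_eq_ediam hcomp hne
    obtain ⟨v, hv, hqp⟩ := exists_norm_eq_one_and_eq_norm_smul (q - p)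
    have : Fact (finrank ℝ E = n + 1) := ⟨hn⟩
    have finrank_orthogonal : finrank ℝ (ℝ ∙ v)ᗮ = n :=
      Submodule.finrank_orthogonal_span_singleton (by aesop)
    set proj := (ℝ ∙ v)ᗮ.orthogonalProjectionOnto
    obtain ⟨b, hb⟩ := ih finrank_orthogonal (hcomp.image proj.continuous)
      (hconv.linear_image proj.toLinearMap) (hne.image proj)
    obtain ⟨b', hb'⟩ := exists_orthonormalBasis_eq_vecCons hn hv b
    refine ⟨b', ?_⟩
    have width_le : width C v ≤ ENNReal.ofReal ‖q - p‖ := by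
      simpa only [← hpq, edist_comm p q, edist_dist, dist_eq_norm] using width_le_ediam C hv
    calc ∏ i, width C (b' i)
        = width C v * ∏ i, width (proj '' C) (b i) := by
          simp [hb', Fin.prod_univ_succ, width_orthogonalProjectionOnto_image, proj]
      _ ≤ ENNReal.ofReal ‖q - p‖ * (n.factorial * volume (proj '' C)) := by gcongr
      _ = n.factorial * (ENNReal.ofReal ‖q - p‖ * volume (proj '' C)) := by ring
      _ ≤ n.factorial * (finrank ℝ E * volume C) := by
        gcongr (n.factorial : ℝ≥0∞) * ?_
        exact ofReal_mul_volume_orthogonalProjectionOnto_image_le hcomp hconv hv hp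
          (by rwa [← hqp, add_sub_cancel])
      _ = (n + 1).factorial * volume C := by
        rw [hn, Nat.factorial_succ]
        push_cast
        ring

section Hyperrectangle

variable {d : ℕ}

theorem volume_mulVec_image {R : Matrix (Fin d) (Fin d) ℝ} (hR : R.det = 1)
    (S : Set (Fin d → ℝ)) : volume (R.mulVec '' S) = volume S := by
  simpa only [LinearMap.det_toLin', hR, abs_one, ENNReal.ofReal_one, one_mul] using!
    Measure.addHaar_image_linearMap volume (toLin' R) S

theorem exists_isHyperrectangle_of_det_eq_one {C : Set (EuclideanSpace ℝ (Fin d))}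
    (hC : Bornology.IsBounded C) {b : OrthonormalBasis (Fin d) ℝ (EuclideanSpace ℝ (Fin d))}
    (hb : (EuclideanSpace.basisFun (Fin d) ℝ).toBasis.det b = 1) :
    ∃ P : Set (Fin d → ℝ), IsHyperrectangle P ∧ WithLp.ofLp '' C ⊆ P ∧
      volume P = ∏ i, width C (b i) := by
  set R : Matrix (Fin d) (Fin d) ℝ := (EuclideanSpace.basisFun (Fin d) ℝ).toBasis.toMatrix b
  have R_orthogonal : R ∈ orthogonalGroup (Fin d) ℝ :=
    (EuclideanSpace.basisFun (Fin d) ℝ).toMatrix_orthonormalBasis_mem_orthogonal b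
  have transpose_mulVec (x : EuclideanSpace ℝ (Fin d)) : Rᵀ *ᵥ x.ofLp = fun i => ⟪b i, x⟫ := by
    ext i
    simp [R, mulVec, dotProduct, PiLp.inner_apply, Module.Basis.toMatrix_apply, mul_comm]
  have image_bounded (i : Fin d) : Bornology.IsBounded ((⟪b i, ·⟫) '' C) :=
    hC.image (innerSL ℝ (b i))
  set lower : Fin d → ℝ := fun i => sInf ((⟪b i, ·⟫) '' C)
  set upper : Fin d → ℝ := fun i => sSup ((⟪b i, ·⟫) '' C)
  have lower_le_upper : lower ≤ upper := fun i =>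
    Real.sInf_le_sSup _ (image_bounded i).bddBelow (image_bounded i).bddAbove
  have R_det : R.det = 1 := hb
  refine ⟨R.mulVec '' Icc lower upper, ⟨R, 0, lower, upper,
    (mem_orthogonalGroup_iff' _ _).1 R_orthogonal, R_det, lower_le_upper, by simp⟩, ?_, ?_⟩
  · rintro _ ⟨x, hx, rfl⟩
    have coord_mem (i : Fin d) : ⟪b i, x⟫ ∈ Icc (lower i) (upper i) :=
      (image_bounded i).subset_Icc_sInf_sSup (mem_image_of_mem _ hx)
    refine ⟨Rᵀ *ᵥ x.ofLp, ?_, ?_⟩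
    · rw [transpose_mulVec]
      exact ⟨fun i => (coord_mem i).1, fun i => (coord_mem i).2⟩
    · rw [mulVec_mulVec, (mem_orthogonalGroup_iff _ _).1 R_orthogonal, one_mulVec]
  · rw [volume_mulVec_image R_det, Real.volume_Icc_pi]
    simp only [width, Real.ediam_eq (image_bounded _), lower, upper]

theorem exists_isHyperrectangle_volume_eq_prod_width [NeZero d]
    {C : Set (EuclideanSpace ℝ (Fin d))} (hC : Bornology.IsBounded C)
    (b : OrthonormalBasis (Fin d) ℝ (EuclideanSpace ℝ (Fin d))) :
    ∃ P : Set (Fin d → ℝ), IsHyperrectangle P ∧ WithLp.ofLp '' C ⊆ P ∧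
      volume P = ∏ i, width C (b i) := by
  set b' := b.adjustToOrientation (EuclideanSpace.basisFun (Fin d) ℝ).toBasis.orientation
  have width_eq (i : Fin d) : width C (b' i) = width C (b i) := by
    rcases b.adjustToOrientation_apply_eq_or_eq_neg _ i with h | h
    · rw [h]
    · rw [h, width_neg]
  have det_eq_one : (EuclideanSpace.basisFun (Fin d) ℝ).toBasis.det b' = 1 :=
    OrthonormalBasis.det_to_matrix_orthonormalBasis_of_same_orientation _ _ (by simp [b'])
  simpa only [width_eq] using exists_isHyperrectangle_of_det_eq_one hC det_eq_one

end Hyperrectangle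

/-- **Hadwiger.** Every convex body `𝒞 ⊆ ℝ^d` is covered by a hyperrectangle
`P` with `Vol(P) ≤ d! · Vol(𝒞)`. -/
theorem hadwiger_covering_hyperrectangle
    (d : ℕ) (hd : 1 ≤ d) (𝒞 : Set (Fin d → ℝ))
    (hcomp : IsCompact 𝒞) (hconv : Convex ℝ 𝒞) :
    ∃ P : Set (Fin d → ℝ), IsHyperrectangle P ∧ 𝒞 ⊆ P ∧
      volume P ≤ (Nat.factorial d : ENNReal) * volume 𝒞 := by
  have : NeZero d := NeZero.of_pos hd
  rcases 𝒞.eq_empty_or_nonempty with rfl | hne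
  · have origin_isHyperrectangle : IsHyperrectangle ({0} : Set (Fin d → ℝ)) :=
      ⟨1, 0, 0, 0, by simp, det_one, le_rfl, by simp⟩
    exact ⟨{0}, origin_isHyperrectangle, empty_subset _, by simp⟩
  let e := (EuclideanSpace.equiv (Fin d) ℝ).symm
  have volume_image : volume (e '' 𝒞) = volume 𝒞 := by
    rw [e.image_eq_preimage_symm]
    exact (PiLp.volume_preserving_ofLp (Fin d)).measure_preimage
      hcomp.isClosed.measurableSet.nullMeasurableSet
  have hcomp' : IsCompact (e '' 𝒞) := hcomp.image e.continuous
  obtain ⟨b, hb⟩ := exists_orthonormalBasis_prod_width_le finrank_euclideanSpace_fin hcomp'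
    (hconv.linear_image e.toLinearMap) (hne.image e)
  obtain ⟨P, hP, image_subset, volume_eq⟩ :=
    exists_isHyperrectangle_volume_eq_prod_width hcomp'.isBounded b
  refine ⟨P, hP, fun x hx => image_subset ⟨e x, mem_image_of_mem e hx, rfl⟩, ?_⟩
  rwa [volume_eq, ← volume_image]
end

section
/- Let d ≥ 1 and set d̃ = d(d−1)/2 and C(d) = 2^{d(d̃+2)}·d^d. For all sufficiently large N ∈ ℕ and every v with 1/N ≤ v ≤ 1, there exists a finite family 𝔔̄ of at most N^{3d²} rotated hyperrectangles in ℝ^d, each of the form R·S·[−1,1]^d + t with R a rotation matrix, S a positive diagonal matrix, and t ∈ [0,1]^d, each of d-dimensional volume exactly v, such that every convex body 𝒞 ⊆ [0,1]^d with Vol(𝒞) ≥ C(d)·v contains at least one member of 𝔔̄ as a subset. -/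
open MeasureTheory Matrix

/-!
Longest chord first: if `[p, p + L • u]` is a diameter of a convex body `K` and `π` is the
projection to `uᗮ`, then the shrunk copy `(1/4) π K + (3/4) π p` of the shadow lifts into `K`
together with a segment of length `L / 2` in direction `u`. By induction on the dimension `K`
contains a rotated box `B` with `Vol K ≤ 2 ^ d² · Vol B`, so `B` shrunk concentrically by a factor
at most `1/2` has volume exactly `v`. Its side lengths are bounded below by a multiple of
`v ≥ 1 / N`, hence every box whose rotation, sides and centre differ from those of the shrunk box
by a small multiple of `1 / N` is still contained in `B`. One box of volume `v` from each occupied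
cell of a grid of that mesh on the space of parameters therefore makes up the family.
-/

section DiameterSegment

variable {E : Type*} [NormedAddCommGroup E] [NormedSpace ℝ E]

theorem exists_diameter_segment [Nontrivial E] {K : Set E} (hK : IsCompact K)
    (hne : K.Nonempty) :
    ∃ (p u : E) (L : ℝ), ‖u‖ = 1 ∧ p ∈ K ∧ p + L • u ∈ K ∧ ∀ x ∈ K, ∀ y ∈ K, ‖x - y‖ ≤ L := by
  obtain ⟨⟨p, q⟩, ⟨hp, hq⟩, hmax⟩ := (hK.prod hK).exists_isMaxOn (hne.prod hne)
    (f := fun z : E × E => ‖z.2 - z.1‖) (by fun_prop)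
  have hdiam : ∀ x ∈ K, ∀ y ∈ K, ‖x - y‖ ≤ ‖q - p‖ := fun x hx y hy => hmax (Set.mk_mem_prod hy hx)
  obtain ⟨u, hu, hqp⟩ : ∃ u : E, ‖u‖ = 1 ∧ ‖q - p‖ • u = q - p := by
    rcases eq_or_ne (q - p) 0 with h | h
    · obtain ⟨u, hu⟩ := exists_norm_eq E zero_le_one
      exact ⟨u, hu, by simp [h]⟩
    · exact ⟨‖q - p‖⁻¹ • (q - p), norm_smul_inv_norm (𝕜 := ℝ) h,
        smul_inv_smul₀ (norm_ne_zero_iff.mpr h) _⟩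
  exact ⟨p, u, ‖q - p‖, hu, hp, by rwa [hqp, add_sub_cancel], hdiam⟩

theorem add_smul_mem_of_convex {V : Type*} [AddCommGroup V] [Module ℝ V] {K : Set V}
    (hK : Convex ℝ K) {z p u : V} {L : ℝ} (hz : z ∈ K) (hp : p ∈ K) (hpu : p + L • u ∈ K)
    {α β a : ℝ} (hα : 0 ≤ α) (hβ : 0 ≤ β) (hαβ : α + β = 1) (ha : 0 ≤ a) (haL : a ≤ β * L) :
    α • z + β • p + a • u ∈ K := by
  obtain ⟨s, hs, rfl⟩ : ∃ s ∈ Set.Icc (0 : ℝ) 1, s * (β * L) = a := by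
    refine ⟨a / (β * L), ⟨div_nonneg ha (ha.trans haL), div_le_one_of_le₀ haL (ha.trans haL)⟩, ?_⟩
    exact div_mul_cancel_of_imp fun h => le_antisymm (h ▸ haL) ha
  have hchord : p + s • (L • u) ∈ K := hK.add_smul_mem hp hpu hs
  convert hK hz hchord hα hβ hαβ using 1
  module

end DiameterSegment

section BoxFrame

variable {E : Type*} [NormedAddCommGroup E] [InnerProductSpace ℝ E]

/-- A frame for a rotated box inside `K` that is comparable to `K`: along each of the orthonormal
directions `b i` the width of `K` is at most `l i`, and `K` contains the box with axes `b`,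
centre `t` and half-sides `l i / 4 ^ (i + 1)`. -/
structure IsBoxFrame {n : ℕ} (K : Set E) (b : Fin n → E) (l : Fin n → ℝ) (t : E) : Prop where
  orthonormal : Orthonormal ℝ b
  width_le : ∀ x ∈ K, ∀ y ∈ K, ∀ i, |inner ℝ (b i) (x - y)| ≤ l i
  mem_of_le : ∀ x, (∀ i, |inner ℝ (b i) (x - t)| ≤ l i / 4 ^ ((i : ℕ) + 1)) → x ∈ K

theorem inner_orthogonalProjectionOnto_orthogonal_singleton [FiniteDimensional ℝ E] {u : E}
    (w : (ℝ ∙ u)ᗮ) (x : E) :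
    inner ℝ (w : E) x = inner ℝ w ((ℝ ∙ u)ᗮ.orthogonalProjectionOnto x) :=
  (Submodule.inner_orthogonalProjectionOnto_eq_of_mem_left w x).symm

theorem mem_of_abs_inner_sub_le_of_projection_eq [FiniteDimensional ℝ E] {K : Set E}
    (hK : Convex ℝ K) {p u : E} {L : ℝ} (hu : ‖u‖ = 1) (hp : p ∈ K) (hpu : p + L • u ∈ K)
    (hL : ∀ x ∈ K, ∀ y ∈ K, |inner ℝ u (x - y)| ≤ L) {x z : E} (hz : z ∈ K)
    (hx : |inner ℝ u (x - p) - L / 2| ≤ L / 4)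
    (hxz : (ℝ ∙ u)ᗮ.orthogonalProjectionOnto (x - ((1 / 4 : ℝ) • z + (3 / 4 : ℝ) • p)) = 0) :
    x ∈ K := by
  have huu : inner ℝ u u = (1 : ℝ) := by simp [hu]
  obtain ⟨a, ha⟩ : ∃ a : ℝ, a • u = x - ((1 / 4 : ℝ) • z + (3 / 4 : ℝ) • p) := by
    rwa [Submodule.orthogonalProjectionOnto_eq_zero_iff, Submodule.orthogonal_orthogonal,
      Submodule.mem_span_singleton] at hxz
  have hheight : a = inner ℝ u (x - p) - 1 / 4 * inner ℝ u (z - p) := by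
    have := congrArg (inner ℝ u) ha
    simp only [inner_sub_right, inner_add_right, inner_smul_right, huu] at this ⊢
    linarith
  have hz_le := (abs_le.mp (hL z hz p hp)).2
  have hz_ge : 0 ≤ inner ℝ u (z - p) := by
    have := (abs_le.mp (hL _ hpu z hz)).2
    simp only [inner_sub_right, inner_add_right, inner_smul_right, huu] at this ⊢
    linarith
  obtain ⟨hx_ge, hx_le⟩ := abs_le.mp hx
  rw [← sub_add_cancel x ((1 / 4 : ℝ) • z + (3 / 4 : ℝ) • p), ← ha, add_comm]
  exact add_smul_mem_of_convex hK hz hp hpu (by norm_num) (by norm_num) (by norm_num)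
    (by linarith) (by linarith)

theorem IsBoxFrame.cons [FiniteDimensional ℝ E] {n : ℕ} {K : Set E} (hK : Convex ℝ K) {p u : E}
    {L : ℝ} (hu : ‖u‖ = 1) (hp : p ∈ K) (hpu : p + L • u ∈ K)
    (hL : ∀ x ∈ K, ∀ y ∈ K, |inner ℝ u (x - y)| ≤ L)
    {b : Fin n → (ℝ ∙ u)ᗮ} {l : Fin n → ℝ} {t : (ℝ ∙ u)ᗮ}
    (hframe : IsBoxFrame ((ℝ ∙ u)ᗮ.orthogonalProjectionOnto '' K) b l t) :
    IsBoxFrame K (vecCons u fun i => (b i : E)) (vecCons L l)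
      ((1 / 4 : ℝ) • t + (3 / 4 : ℝ) • (ℝ ∙ u)ᗮ.orthogonalProjectionOnto p +
        (inner ℝ u p + L / 2) • u) := by
  set π := (ℝ ∙ u)ᗮ.orthogonalProjectionOnto
  set T : E := (1 / 4 : ℝ) • t + (3 / 4 : ℝ) • π p + (inner ℝ u p + L / 2) • u with hT
  have hbu (w : (ℝ ∙ u)ᗮ) : inner ℝ u (w : E) = 0 :=
    Submodule.mem_orthogonal_singleton_iff_inner_right.mp w.2
  have hπT : π T = (1 / 4 : ℝ) • t + (3 / 4 : ℝ) • π p := by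
    have hπu : π u = 0 := by
      rw [Submodule.orthogonalProjectionOnto_eq_zero_iff, Submodule.orthogonal_orthogonal]
      exact Submodule.mem_span_singleton_self u
    simp [hT, hπu, π]
  have huT : inner ℝ u T = inner ℝ u p + L / 2 := by
    simp [hT, inner_add_right, inner_smul_right, hbu, hu]
  refine ⟨?_, ?_, fun x hx => ?_⟩
  · exact orthonormal_vecCons_iff.mpr ⟨hu, fun i => hbu (b i),
      hframe.orthonormal.comp_linearIsometry (ℝ ∙ u)ᗮ.subtypeₗᵢ⟩
  · intro x hx y hy
    refine Fin.forall_fin_succ.mpr ⟨hL x hx y hy, fun i => ?_⟩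
    simpa only [cons_val_succ, inner_orthogonalProjectionOnto_orthogonal_singleton, map_sub] using
      hframe.width_le _ (Set.mem_image_of_mem π hx) _ (Set.mem_image_of_mem π hy) i
  · obtain ⟨hx₀, hx⟩ := Fin.forall_fin_succ.mp hx
    obtain ⟨z, hz, hzx⟩ : (4 : ℝ) • π x - (3 : ℝ) • π p ∈ π '' K := by
      refine hframe.mem_of_le _ fun i => ?_
      have hscale : (4 : ℝ) • π x - (3 : ℝ) • π p - t = (4 : ℝ) • π (x - T) := by
        rw [map_sub, hπT]
        module
      have hxi := hx i
      simp only [cons_val_succ, inner_orthogonalProjectionOnto_orthogonal_singleton, Fin.val_succ,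
        pow_succ _ ((i : ℕ) + 1), ← div_div] at hxi
      rw [hscale, inner_smul_right, abs_mul, Nat.abs_ofNat]
      linarith
    refine mem_of_abs_inner_sub_le_of_projection_eq hK hu hp hpu hL hz ?_ ?_
    · simpa [inner_sub_right, huT, sub_sub] using hx₀
    · simp only [map_sub, map_add, map_smul]
      change π x - ((1 / 4 : ℝ) • π z + (3 / 4 : ℝ) • π p) = 0
      rw [hzx]
      module

theorem exists_isBoxFrame [FiniteDimensional ℝ E] {n : ℕ} (hn : Module.finrank ℝ E = n)
    {K : Set E} (hK : IsCompact K) (hconv : Convex ℝ K) (hne : K.Nonempty) :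
    ∃ (b : Fin n → E) (l : Fin n → ℝ) (t : E), IsBoxFrame K b l t := by
  induction n generalizing E with
  | zero =>
    obtain ⟨p, hp⟩ := hne
    have := Module.finrank_zero_iff.mp hn
    exact ⟨Fin.elim0, Fin.elim0, p, ⟨fun i => i.elim0, fun i => i.elim0⟩,
      fun _ _ _ _ i => i.elim0, fun x _ => Subsingleton.elim p x ▸ hp⟩
  | succ n ih =>
    have : Fact (Module.finrank ℝ E = n + 1) := ⟨hn⟩
    have : Nontrivial E := Module.nontrivial_of_finrank_pos (R := ℝ) (by omega)
    obtain ⟨p, u, L, hu, hp, hpu, hdiam⟩ := exists_diameter_segment hK hne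
    have hwidth : ∀ x ∈ K, ∀ y ∈ K, |inner ℝ u (x - y)| ≤ L := fun x hx y hy => by
      simpa [hu] using (abs_real_inner_le_norm u (x - y)).trans
        (mul_le_mul_of_nonneg_left (hdiam x hx y hy) (norm_nonneg u))
    have hu₀ : u ≠ 0 := norm_ne_zero_iff.mp (hu ▸ one_ne_zero)
    let π := (ℝ ∙ u)ᗮ.orthogonalProjectionOnto
    obtain ⟨b, l, t, hframe⟩ := ih (Submodule.finrank_orthogonal_span_singleton hu₀)
      (hK.image π.continuous) (hconv.linear_image π.toLinearMap) (hne.image π)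
    exact ⟨_, _, _, hframe.cons hconv hu hp hpu hwidth⟩

end BoxFrame

theorem exists_specialOrthogonal_abs_inner_eq {ι : Type*} [Fintype ι] [DecidableEq ι] [Nonempty ι]
    {b : ι → EuclideanSpace ℝ ι} (hb : Orthonormal ℝ b) :
    ∃ R ∈ specialOrthogonalGroup ι ℝ, ∀ (z : ι → ℝ) i,
      |(Rᵀ *ᵥ z) i| = |inner ℝ (b i) (WithLp.toLp 2 z)| := by
  let e : OrthonormalBasis ι ℝ (EuclideanSpace ℝ ι) :=
    (basisOfOrthonormalOfCardEqFinrank hb (by simp)).toOrthonormalBasis (by simpa using hb)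
  let std := EuclideanSpace.basisFun ι ℝ
  let f := e.adjustToOrientation std.toBasis.orientation
  refine ⟨std.toBasis.toMatrix f, mem_specialOrthogonalGroup_iff.mpr
    ⟨std.toMatrix_orthonormalBasis_mem_orthogonal f, ?_⟩, fun z i => ?_⟩
  · exact std.det_to_matrix_orthonormalBasis_of_same_orientation f
      (e.orientation_adjustToOrientation _).symm
  · have hcoord : ((std.toBasis.toMatrix f)ᵀ *ᵥ z) i = inner ℝ (f i) (WithLp.toLp 2 z) := by
      simp [mulVec, dotProduct, Module.Basis.toMatrix_apply, PiLp.inner_apply, std, mul_comm]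
    have he : e i = b i := by simp [e]
    rw [hcoord, ← he]
    rcases e.adjustToOrientation_apply_eq_or_eq_neg std.toBasis.orientation i with h | h <;>
      simp [f, h]

theorem exists_specialOrthogonal_box_subset {d : ℕ} [NeZero d] {K : Set (Fin d → ℝ)}
    (hK : IsCompact K) (hconv : Convex ℝ K) (hne : K.Nonempty) :
    ∃ R ∈ specialOrthogonalGroup (Fin d) ℝ, ∃ l t : Fin d → ℝ,
      (∀ x ∈ K, ∀ y ∈ K, ∀ i, |(Rᵀ *ᵥ (x - y)) i| ≤ l i) ∧
      ∀ x, (∀ i, |(Rᵀ *ᵥ (x - t)) i| ≤ l i / 4 ^ ((i : ℕ) + 1)) → x ∈ K := by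
  let e : (Fin d → ℝ) ≃L[ℝ] EuclideanSpace ℝ (Fin d) := (EuclideanSpace.equiv (Fin d) ℝ).symm
  obtain ⟨b, l, t, hframe⟩ := exists_isBoxFrame finrank_euclideanSpace_fin (hK.image e.continuous)
    (hconv.linear_image e.toLinearMap) (hne.image e)
  obtain ⟨R, hR, hRb⟩ := exists_specialOrthogonal_abs_inner_eq hframe.orthonormal
  refine ⟨R, hR, l, e.symm t, fun x hx y hy i => ?_, fun x hx => ?_⟩
  · rw [hRb]
    exact hframe.width_le _ (Set.mem_image_of_mem e hx) _ (Set.mem_image_of_mem e hy) i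
  · refine (e.injective.mem_set_image).mp (hframe.mem_of_le (e x) fun i => ?_)
    exact (hRb _ i).symm.trans_le (hx i)

section MatrixBounds

variable {m n : Type*} [Fintype n]

theorem abs_mulVec_le {A : Matrix m n ℝ} {z : n → ℝ} {a c : ℝ} (ha : ∀ i j, |A i j| ≤ a)
    (hz : ∀ j, |z j| ≤ c) (i : m) : |(A *ᵥ z) i| ≤ Fintype.card n * (a * c) := by
  calc |∑ j, A i j * z j| ≤ ∑ j, |A i j * z j| := Finset.abs_sum_le_sum_abs _ _
    _ ≤ ∑ _j : n, a * c := Finset.sum_le_sum fun j _ => by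
        rw [abs_mul]
        exact mul_le_mul (ha i j) (hz j) (abs_nonneg _) ((abs_nonneg _).trans (ha i j))
    _ = Fintype.card n * (a * c) := by simp

theorem abs_det_mul_volume_le_prod [DecidableEq n] (A : Matrix n n ℝ) {K : Set (n → ℝ)}
    {l : n → ℝ} (hl : ∀ x ∈ K, ∀ y ∈ K, ∀ i, |(A *ᵥ (x - y)) i| ≤ l i) :
    ENNReal.ofReal |A.det| * volume K ≤ ∏ i, ENNReal.ofReal (l i) := by
  rw [← LinearMap.det_toLin', ← Measure.addHaar_image_linearMap]
  refine (Real.volume_pi_le_prod_diam _).trans (Finset.prod_le_prod' fun i _ => Metric.ediam_le ?_)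
  rintro _ ⟨_, ⟨x, hx, rfl⟩, rfl⟩ _ ⟨_, ⟨y, hy, rfl⟩, rfl⟩
  rw [edist_dist]
  apply ENNReal.ofReal_le_ofReal
  simpa [mulVec_sub, Real.dist_eq] using hl x hx y hy i

end MatrixBounds

theorem exists_finset_net_of_norm_le {α κ : Type*} [Fintype κ] (φ : α → κ → ℝ) {P : Set α} {L : ℕ}
    {ε : ℝ} (hε : 0 < ε) (hφ : ∀ p ∈ P, ‖φ p‖ ≤ L * ε) :
    ∃ F : Finset α, ↑F ⊆ P ∧ F.card ≤ (2 * L + 1) ^ Fintype.card κ ∧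
      ∀ p ∈ P, ∃ q ∈ F, dist (φ q) (φ p) ≤ ε := by
  classical
  let cell (p : α) (k : κ) : ℤ := ⌊φ p k / ε⌋
  let cells : Finset (κ → ℤ) := Fintype.piFinset fun _ => Finset.Icc (-L : ℤ) L
  have hcell : cell '' P ⊆ cells := by
    rintro _ ⟨p, hp, rfl⟩
    refine Fintype.mem_piFinset.mpr fun k => Finset.mem_Icc.mpr ?_
    obtain ⟨hlo, hhi⟩ := abs_le.mp ((norm_le_pi_norm (φ p) k).trans (hφ p hp))
    constructor
    · rw [Int.le_floor, le_div_iff₀ hε]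
      push_cast
      linarith
    · exact_mod_cast (Int.floor_le _).trans ((div_le_iff₀ hε).mpr hhi)
  obtain ⟨S, hSP, hS⟩ := Set.exists_subset_bijOn P cell
  lift S to Finset α using hS.finite_iff_finite.mpr (cells.finite_toSet.subset hcell)
  refine ⟨S, hSP, ?_, fun p hp => ?_⟩
  · have hcells : cells.card = (2 * L + 1) ^ Fintype.card κ := by
      have hside : (L + 1 + L : ℤ).toNat = 2 * L + 1 := by omega
      simp [cells, hside]
    exact (Finset.card_le_card_of_injOn cell (fun p hp => hcell (hS.mapsTo hp)) hS.injOn).trans_eq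
      hcells
  · obtain ⟨q, hq, hqp⟩ := hS.surjOn ⟨p, hp, rfl⟩
    refine ⟨q, hq, (dist_pi_le_iff hε.le).mpr fun k => ?_⟩
    have := (Int.abs_sub_lt_one_of_floor_eq_floor (congrFun hqp k)).le
    rwa [← sub_div, abs_div, abs_of_pos hε, div_le_one hε] at this

theorem prod_two_pow_odd (d : ℕ) : ∏ i : Fin d, (2 : ℝ) ^ (2 * (i : ℕ) + 1) = 2 ^ d ^ 2 := by
  induction d with
  | zero => simp
  | succ d ih =>
    rw [Fin.prod_univ_castSucc]
    simp only [Fin.val_castSucc, Fin.val_last]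
    rw [ih, ← pow_add]
    congr 1
    ring

/-- The rotated hyperrectangle `rotation · diag(halfSide) · [-1, 1]^ι + center`, recorded by its
parameters rather than as a set, so that nearby boxes can be compared. -/
structure RotatedBox (ι : Type*) [Fintype ι] [DecidableEq ι] where
  rotation : specialOrthogonalGroup ι ℝ
  halfSide : ι → ℝ
  halfSide_pos : ∀ i, 0 < halfSide i
  center : ι → ℝ

namespace RotatedBox

variable {ι : Type*} [Fintype ι] [DecidableEq ι]

/-- The set of points of a rotated box. -/
def toSet (B : RotatedBox ι) : Set (ι → ℝ) :=
  (fun x => B.rotation.1 *ᵥ (fun i => B.halfSide i * x i) + B.center) '' Set.Icc (-1 : ι → ℝ) 1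

theorem transpose_mul_rotation (B : RotatedBox ι) : B.rotation.1ᵀ * B.rotation.1 = 1 :=
  (mem_orthogonalGroup_iff' ι ℝ).mp (mem_specialOrthogonalGroup_iff.mp B.rotation.2).1

theorem det_rotation (B : RotatedBox ι) : B.rotation.1.det = 1 :=
  (mem_specialOrthogonalGroup_iff.mp B.rotation.2).2

theorem abs_rotation_le_one (B : RotatedBox ι) (i j : ι) : |B.rotation.1 i j| ≤ 1 :=
  entry_norm_bound_of_unitary (mem_specialOrthogonalGroup_iff.mp B.rotation.2).1 i j

theorem mem_toSet_iff {B : RotatedBox ι} {x : ι → ℝ} :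
    x ∈ B.toSet ↔ ∀ i, |(B.rotation.1ᵀ *ᵥ (x - B.center)) i| ≤ B.halfSide i := by
  constructor
  · rintro ⟨y, hy, rfl⟩ i
    rw [add_sub_cancel_right, mulVec_mulVec, transpose_mul_rotation, one_mulVec, abs_mul,
      abs_of_pos (B.halfSide_pos i)]
    exact mul_le_of_le_one_right (B.halfSide_pos i).le (abs_le.mpr ⟨hy.1 i, hy.2 i⟩)
  · intro hx
    have hy (i : ι) :
        |(B.rotation.1ᵀ *ᵥ (x - B.center)) i / B.halfSide i| ≤ 1 := by
      rw [abs_div, abs_of_pos (B.halfSide_pos i)]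
      exact (div_le_one (B.halfSide_pos i)).mpr (hx i)
    refine ⟨_, ⟨fun i => (abs_le.mp (hy i)).1, fun i => (abs_le.mp (hy i)).2⟩, ?_⟩
    simp only [mul_div_cancel₀ _ (B.halfSide_pos _).ne']
    rw [mulVec_mulVec, mul_eq_one_comm.mp B.transpose_mul_rotation, one_mulVec, sub_add_cancel]

theorem volume_toSet (B : RotatedBox ι) :
    volume B.toSet = ENNReal.ofReal (∏ i, 2 * B.halfSide i) := by
  have himage : B.toSet = (· + B.center) ''
      (toLin' (B.rotation.1 * diagonal B.halfSide) '' Set.Icc (-1) 1) := by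
    rw [Set.image_image]
    refine Set.image_congr fun x _ => ?_
    rw [toLin'_apply, ← mulVec_mulVec]
    congr 2
    ext i
    rw [mulVec_diagonal]
  have hnonneg : 0 ≤ ∏ i, B.halfSide i := Finset.prod_nonneg fun i _ => (B.halfSide_pos i).le
  rw [himage, Set.image_add_right, measure_preimage_add_right, Measure.addHaar_image_linearMap,
    LinearMap.det_toLin', det_mul, B.det_rotation, one_mul, det_diagonal, abs_of_nonneg hnonneg,
    Real.volume_Icc_pi, ← ENNReal.ofReal_prod_of_nonneg (by simp), ← ENNReal.ofReal_mul hnonneg,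
    ← Finset.prod_mul_distrib]
  refine congrArg ENNReal.ofReal (Finset.prod_congr rfl fun i _ => ?_)
  simp only [Pi.one_apply, Pi.neg_apply]
  ring

theorem volume_toSet_eq_ofReal_iff {B : RotatedBox ι} {v : ℝ} (hv : 0 ≤ v) :
    volume B.toSet = ENNReal.ofReal v ↔ ∏ i, 2 * B.halfSide i = v := by
  rw [volume_toSet, ENNReal.ofReal_eq_ofReal_iff
    (Finset.prod_nonneg fun i _ => (mul_pos two_pos (B.halfSide_pos i)).le) hv]

theorem center_mem_toSet (B : RotatedBox ι) : B.center ∈ B.toSet :=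
  mem_toSet_iff.mpr fun i => by simpa using (B.halfSide_pos i).le

theorem halfSide_le_card_of_toSet_subset_Icc {B : RotatedBox ι} (hB : B.toSet ⊆ Set.Icc 0 1)
    (i : ι) : B.halfSide i ≤ Fintype.card ι := by
  let corner : ι → ℝ := B.rotation.1 *ᵥ B.halfSide + B.center
  have hcorner : corner ∈ B.toSet :=
    ⟨1, ⟨neg_le_self zero_le_one, le_rfl⟩, by simp [corner]⟩
  have hdist (j : ι) : |(corner - B.center) j| ≤ 1 :=
    Real.dist_le_of_mem_Icc_01 ⟨(hB hcorner).1 j, (hB hcorner).2 j⟩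
      ⟨(hB B.center_mem_toSet).1 j, (hB B.center_mem_toSet).2 j⟩
  calc B.halfSide i = (B.rotation.1ᵀ *ᵥ (corner - B.center)) i := by
        simp [corner, mulVec_mulVec, transpose_mul_rotation]
    _ ≤ Fintype.card ι * (1 * 1) :=
        (le_abs_self _).trans (abs_mulVec_le (fun i j => B.abs_rotation_le_one j i) hdist i)
    _ = Fintype.card ι := by ring

/-- The box with the same centre and axes as `B` and all sides multiplied by `r`. -/
def scale (B : RotatedBox ι) (r : ℝ) (hr : 0 < r) : RotatedBox ι where
  rotation := B.rotation
  halfSide := r • B.halfSide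
  halfSide_pos i := mul_pos hr (B.halfSide_pos i)
  center := B.center

theorem exists_scale_volume_eq [Nonempty ι] (B : RotatedBox ι) {v c : ℝ} (hv : 0 < v) (hc : 0 ≤ c)
    (hvB : v ≤ c ^ Fintype.card ι * ∏ i, 2 * B.halfSide i) :
    ∃ (r : ℝ) (hr : 0 < r), r ≤ c ∧ volume (B.scale r hr).toSet = ENNReal.ofReal v := by
  have hP : 0 < ∏ i, 2 * B.halfSide i :=
    Finset.prod_pos fun i _ => mul_pos two_pos (B.halfSide_pos i)
  set ratio := v / ∏ i, 2 * B.halfSide i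
  have hratio : 0 < ratio := div_pos hv hP
  set r := ratio ^ (Fintype.card ι : ℝ)⁻¹
  have hr : 0 < r := Real.rpow_pos_of_pos hratio _
  have hpow : r ^ Fintype.card ι = ratio :=
    Real.rpow_inv_natCast_pow hratio.le Fintype.card_ne_zero
  refine ⟨r, hr, ?_, (volume_toSet_eq_ofReal_iff hv.le).mpr ?_⟩
  · rw [← pow_le_pow_iff_left₀ hr.le hc (Fintype.card_ne_zero (α := ι)), hpow]
    exact (div_le_iff₀ hP).mpr hvB
  · calc ∏ i, 2 * (r * B.halfSide i) = r ^ Fintype.card ι * ∏ i, 2 * B.halfSide i := by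
          simp only [mul_left_comm 2 r, Finset.prod_mul_distrib, Finset.prod_const,
            Finset.card_univ]
      _ = v := by rw [hpow, div_mul_cancel₀ v hP.ne']

/-- All parameters of a box in one vector, whose sup norm measures how close two boxes are. -/
def coord (B : RotatedBox ι) : (ι × ι) ⊕ (ι ⊕ ι) → ℝ :=
  Sum.elim (fun ij => B.rotation.1 ij.1 ij.2) (Sum.elim B.halfSide B.center)

theorem dist_coord_le_iff {B B' : RotatedBox ι} {ε : ℝ} (hε : 0 ≤ ε) :
    dist B'.coord B.coord ≤ ε ↔ (∀ i j, |(B'.rotation.1 - B.rotation.1) i j| ≤ ε) ∧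
      (∀ i, |B'.halfSide i - B.halfSide i| ≤ ε) ∧ ∀ i, |(B'.center - B.center) i| ≤ ε := by
  simp [dist_pi_le_iff hε, coord, Real.dist_eq]

theorem abs_transpose_mulVec_sub_center_le {B B' : RotatedBox ι} {ε M : ℝ} (hε : 0 ≤ ε)
    (hBB' : dist B'.coord B.coord ≤ ε) (hM : ∀ i, B'.halfSide i ≤ M) {x : ι → ℝ}
    (hx : x ∈ B'.toSet) (i : ι) :
    |(B.rotation.1ᵀ *ᵥ (x - B.center)) i| ≤
      B.halfSide i + (1 + Fintype.card ι + Fintype.card ι ^ 2 * M) * ε := by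
  obtain ⟨hR, hs, ht⟩ := (dist_coord_le_iff hε).mp hBB'
  obtain ⟨y, hy, rfl⟩ := hx
  set w : ι → ℝ := fun j => B'.halfSide j * y j
  set err : ι → ℝ := (B'.rotation.1 - B.rotation.1) *ᵥ w + (B'.center - B.center) with herr_def
  have hw (j : ι) : |w j| ≤ B'.halfSide j := by
    rw [abs_mul, abs_of_pos (B'.halfSide_pos j)]
    exact mul_le_of_le_one_right (B'.halfSide_pos j).le (abs_le.mpr ⟨hy.1 j, hy.2 j⟩)
  have herr (j : ι) : |err j| ≤ Fintype.card ι * (ε * M) + ε :=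
    (abs_add_le _ _).trans
      (add_le_add (abs_mulVec_le hR (fun k => (hw k).trans (hM k)) j) (ht j))
  have hdecomp : B.rotation.1ᵀ *ᵥ (B'.rotation.1 *ᵥ w + B'.center - B.center) =
      w + B.rotation.1ᵀ *ᵥ err := by
    have : B'.rotation.1 *ᵥ w + B'.center - B.center = B.rotation.1 *ᵥ w + err := by
      rw [herr_def, sub_mulVec]
      abel
    rw [this, mulVec_add, mulVec_mulVec, transpose_mul_rotation, one_mulVec]
  calc |(B.rotation.1ᵀ *ᵥ (B'.rotation.1 *ᵥ w + B'.center - B.center)) i|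
      ≤ |w i| + |(B.rotation.1ᵀ *ᵥ err) i| := by
        rw [hdecomp]
        exact abs_add_le _ _
    _ ≤ (B.halfSide i + ε) + Fintype.card ι * (1 * (Fintype.card ι * (ε * M) + ε)) := by
        refine add_le_add ?_ (abs_mulVec_le (fun i j => B.abs_rotation_le_one j i) herr i)
        linarith [hw i, (abs_le.mp (hs i)).2]
    _ = _ := by ring

/-- The boxes of volume `v` from which the discrete family is drawn: their parameters are bounded,
with half-sides at most the dimension, as holds for any box contained in the unit cube. -/
def admissible (ι : Type*) [Fintype ι] [DecidableEq ι] (v : ℝ) : Set (RotatedBox ι) :=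
  {B | volume B.toSet = ENNReal.ofReal v ∧ (∀ i, B.halfSide i ≤ Fintype.card ι) ∧
    B.center ∈ Set.Icc 0 1}

theorem norm_center_le_one {v : ℝ} {B : RotatedBox ι} (hB : B ∈ admissible ι v) : ‖B.center‖ ≤ 1 :=
  (pi_norm_le_iff_of_nonneg zero_le_one).mpr fun i =>
    abs_le.mpr ⟨neg_one_lt_zero.le.trans (hB.2.2.1 i), hB.2.2.2 i⟩

theorem norm_coord_le_card {v : ℝ} {B : RotatedBox ι} (hB : B ∈ admissible ι v) :
    ‖B.coord‖ ≤ Fintype.card ι := by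
  have one_le (i : ι) : (1 : ℝ) ≤ Fintype.card ι := by
    exact_mod_cast Fintype.card_pos_iff.mpr ⟨i⟩
  refine (pi_norm_le_iff_of_nonneg (Nat.cast_nonneg _)).mpr ?_
  rintro (⟨i, j⟩ | i | i)
  · exact (B.abs_rotation_le_one i j).trans (one_le i)
  · simpa [coord, abs_of_pos (B.halfSide_pos i)] using hB.2.1 i
  · exact (norm_le_pi_norm B.center i).trans ((norm_center_le_one hB).trans (one_le i))

theorem dist_coord_eq_dist_center [Unique ι] {B B' : RotatedBox ι}
    (h : volume B'.toSet = volume B.toSet) : dist B'.coord B.coord = dist B'.center B.center := by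
  have hR (i j : ι) : B'.rotation.1 i j = B.rotation.1 i j := by
    have := B'.det_rotation.trans B.det_rotation.symm
    simpa [det_unique, Subsingleton.elim i default, Subsingleton.elim j default] using this
  have hs (i : ι) : B'.halfSide i = B.halfSide i := by
    have := (volume_toSet_eq_ofReal_iff (Finset.prod_nonneg fun i _ =>
      (mul_pos two_pos (B.halfSide_pos i)).le)).mp (h.trans B.volume_toSet)
    simpa [Subsingleton.elim i default] using this
  refine eq_of_forall_ge_iff fun ε => ?_
  rcases le_or_gt 0 ε with hε | hε
  · simp [dist_coord_le_iff hε, hR, hs, hε, dist_pi_le_iff hε, Real.dist_eq]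
  · exact iff_of_false (hε.trans_le dist_nonneg).not_ge (hε.trans_le dist_nonneg).not_ge

theorem exists_finset_admissible_net {d : ℕ} [NeZero d] (v : ℝ) {L : ℕ} {ε : ℝ} (hε : 0 < ε)
    (hL : d ≤ L * ε) :
    ∃ F : Finset (RotatedBox (Fin d)), ↑F ⊆ admissible (Fin d) v ∧
      F.card ≤ (2 * L + 1) ^ (3 * d ^ 2 - 1) ∧
      ∀ B ∈ admissible (Fin d) v, ∃ B' ∈ F, dist B'.coord B.coord ≤ ε := by
  have hd : 1 ≤ d := NeZero.one_le
  rcases hd.eq_or_lt with rfl | hd₂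
  -- A rotated box on the line is determined by its length and centre, so two parameters are saved.
  · obtain ⟨F, hF, hcard, hnet⟩ := exists_finset_net_of_norm_le center hε
      fun B (hB : B ∈ admissible (Fin 1) v) =>
        (norm_center_le_one hB).trans (Nat.cast_one.symm.trans_le hL)
    refine ⟨F, hF, hcard.trans (Nat.pow_le_pow_right (by omega) (by simp)), fun B hB => ?_⟩
    obtain ⟨B', hB', hdist⟩ := hnet B hB
    exact ⟨B', hB', (dist_coord_eq_dist_center ((hF hB').1.trans hB.1.symm)).trans_le hdist⟩
  · obtain ⟨F, hF, hcard, hnet⟩ := exists_finset_net_of_norm_le coord hε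
      fun B (hB : B ∈ admissible (Fin d) v) =>
        (norm_coord_le_card hB).trans (by rwa [Fintype.card_fin])
    refine ⟨F, hF, hcard.trans (Nat.pow_le_pow_right (by omega) ?_), hnet⟩
    simp only [Fintype.card_sum, Fintype.card_prod, Fintype.card_fin]
    exact Nat.le_sub_one_of_lt (by nlinarith)

theorem exists_toSet_subset_volume_le {d : ℕ} [NeZero d] {K : Set (Fin d → ℝ)} (hK : IsCompact K)
    (hconv : Convex ℝ K) (hvol : 0 < volume K) :
    ∃ B : RotatedBox (Fin d), B.toSet ⊆ K ∧
      volume K ≤ ENNReal.ofReal (2 ^ d ^ 2 * ∏ i, 2 * B.halfSide i) := by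
  obtain ⟨R, hR, l, t, hwidth, hbox⟩ :=
    exists_specialOrthogonal_box_subset hK hconv (nonempty_of_measure_ne_zero hvol.ne')
  have hvol_le : volume K ≤ ∏ i, ENNReal.ofReal (l i) := by
    simpa [(mem_specialOrthogonalGroup_iff.mp hR).2] using abs_det_mul_volume_le_prod Rᵀ hwidth
  have hl (i : Fin d) : 0 < l i :=
    ENNReal.ofReal_pos.mp (CanonicallyOrderedAdd.prod_pos.mp (hvol.trans_le hvol_le) i
      (Finset.mem_univ i))
  refine ⟨⟨⟨R, hR⟩, fun i => l i / 4 ^ ((i : ℕ) + 1), fun i => div_pos (hl i) (by positivity), t⟩,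
    fun x hx => hbox x (mem_toSet_iff.mp hx), hvol_le.trans_eq ?_⟩
  rw [← ENNReal.ofReal_prod_of_nonneg fun i _ => (hl i).le, ← prod_two_pow_odd,
    ← Finset.prod_mul_distrib]
  refine congrArg ENNReal.ofReal (Finset.prod_congr rfl fun i _ => ?_)
  have hpow : (4 : ℝ) ^ ((i : ℕ) + 1) = 2 ^ (2 * (i : ℕ) + 1) * 2 := by
    rw [← pow_succ, show (4 : ℝ) = 2 ^ 2 by norm_num, ← pow_mul, mul_add_one]
  change l i = 2 ^ (2 * (i : ℕ) + 1) * (2 * (l i / 4 ^ ((i : ℕ) + 1)))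
  rw [hpow]
  field_simp

theorem prod_halfSide_le_mul_pow (B : RotatedBox ι) {M : ℝ} (hM : ∀ i, B.halfSide i ≤ M) (i : ι) :
    ∏ j, B.halfSide j ≤ B.halfSide i * M ^ (Fintype.card ι - 1) := by
  rw [← Finset.mul_prod_erase _ _ (Finset.mem_univ i)]
  refine mul_le_mul_of_nonneg_left ?_ (B.halfSide_pos i).le
  simpa [Finset.card_erase_of_mem] using Finset.prod_le_prod
    (fun j (_ : j ∈ Finset.univ.erase i) => (B.halfSide_pos j).le) fun j _ => hM j

theorem toSet_subset_of_dist_coord_scale_le {d : ℕ} [NeZero d] {B B' : RotatedBox (Fin d)}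
    {r v ε : ℝ} (hr : 0 < r) (hr₂ : r ≤ 1 / 2) (hε : 0 ≤ ε)
    (hB : ∀ i, B.halfSide i ≤ d) (hB' : ∀ i, B'.halfSide i ≤ d)
    (hvB : v ≤ ∏ i, B.halfSide i) (hεv : 6 * d ^ (d + 3) * ε ≤ v)
    (hdist : dist B'.coord (B.scale r hr).coord ≤ ε) : B'.toSet ⊆ B.toSet := by
  intro x hx
  refine mem_toSet_iff.mpr fun i => ?_
  have hd : (1 : ℝ) ≤ d := by exact_mod_cast NeZero.one_le (n := d)
  have hmesh : 6 * d ^ 3 * ε ≤ B.halfSide i := by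
    refine le_of_mul_le_mul_right ?_ (pow_pos (zero_lt_one.trans_le hd) d)
    calc 6 * d ^ 3 * ε * d ^ d = 6 * d ^ (d + 3) * ε := by ring
      _ ≤ B.halfSide i * d ^ (d - 1) := by
        simpa using hεv.trans (hvB.trans (B.prod_halfSide_le_mul_pow hB i))
      _ ≤ B.halfSide i * d ^ d := by
        have := B.halfSide_pos i
        gcongr
        omega
  calc |(B.rotation.1ᵀ *ᵥ (x - B.center)) i|
      ≤ r * B.halfSide i + (1 + d + d ^ 2 * d) * ε := by
        simpa [scale] using abs_transpose_mulVec_sub_center_le hε hdist hB' hx i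
    _ ≤ 1 / 2 * B.halfSide i + (d ^ 3 + d ^ 3 + d ^ 3) * ε := by
        have := B.halfSide_pos i
        gcongr
        · exact one_le_pow₀ hd
        · exact le_self_pow₀ hd (by norm_num)
        · exact (pow_succ (d : ℝ) 2).ge
    _ ≤ B.halfSide i := by linarith

theorem exists_admissible_forall_dist_coord_le_subset {d : ℕ} [NeZero d] {K : Set (Fin d → ℝ)}
    (hK01 : K ⊆ Set.Icc 0 1) (hK : IsCompact K) (hconv : Convex ℝ K) {v ε : ℝ} (hv : 0 < v)
    (hε : 0 ≤ ε) (hεv : 6 * d ^ (d + 3) * ε ≤ v)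
    (hvol : ENNReal.ofReal (2 ^ (d * (d + 1)) * v) ≤ volume K) :
    ∃ B ∈ admissible (Fin d) v, ∀ B' ∈ admissible (Fin d) v,
      dist B'.coord B.coord ≤ ε → B'.toSet ⊆ K := by
  obtain ⟨B, hBK, hKB⟩ := exists_toSet_subset_volume_le hK hconv
    ((ENNReal.ofReal_pos.mpr (by positivity)).trans_le hvol)
  have hside (i : Fin d) : B.halfSide i ≤ d := by
    simpa using halfSide_le_card_of_toSet_subset_Icc (hBK.trans hK01) i
  have hvB : v ≤ ∏ i, B.halfSide i := by
    have h := (ENNReal.ofReal_le_ofReal_iff'.mp (hvol.trans hKB)).resolve_right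
      (not_le.mpr (by positivity))
    rw [Finset.prod_mul_distrib, Finset.prod_const, Finset.card_univ, Fintype.card_fin, ← mul_assoc,
      ← pow_add, sq, ← mul_add_one] at h
    exact le_of_mul_le_mul_left h (by positivity)
  obtain ⟨r, hr, hr₂, hvr⟩ := B.exists_scale_volume_eq hv one_half_pos.le (hvB.trans_eq (by
    simp [Finset.prod_mul_distrib]))
  refine ⟨B.scale r hr, ⟨hvr, fun i => ?_, hK01 (hBK B.center_mem_toSet)⟩, fun B' hB' hdist => ?_⟩
  · have := mul_le_of_le_one_left (B.halfSide_pos i).le (hr₂.trans one_half_lt_one.le)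
    simpa [scale] using this.trans (hside i)
  · exact (toSet_subset_of_dist_coord_scale_le hr hr₂ hε hside (by simpa using hB'.2.1) hvB hεv
      hdist).trans hBK

end RotatedBox

theorem two_pow_mul_add_one_le {d : ℕ} (hd : 1 ≤ d) :
    2 ^ (d * (d + 1)) ≤ 2 ^ (d * (d * (d - 1) / 2 + 2)) * d ^ d := by
  refine le_mul_of_le_of_one_le (Nat.pow_le_pow_right two_pos (Nat.mul_le_mul_left d ?_))
    (Nat.one_le_pow _ _ hd)
  suffices d - 1 ≤ d * (d - 1) / 2 by omega
  obtain ⟨k, rfl⟩ := Nat.exists_eq_add_of_le' hd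
  rw [Nat.add_sub_cancel, Nat.le_div_iff_mul_le two_pos]
  nlinarith [Nat.le_mul_self k]

theorem two_mul_add_one_pow_le {c k N : ℕ} (hc : 1 ≤ c) (hN : 1 ≤ N) (hcN : (3 * c) ^ k ≤ N) :
    (2 * (c * N) + 1) ^ k ≤ N ^ (k + 1) := by
  calc (2 * (c * N) + 1) ^ k ≤ (3 * c * N) ^ k :=
        Nat.pow_le_pow_left (by linarith [Nat.mul_le_mul hc hN]) k
    _ = (3 * c) ^ k * N ^ k := mul_pow _ _ _
    _ ≤ N * N ^ k := Nat.mul_le_mul_right _ hcN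
    _ = N ^ (k + 1) := (pow_succ' N k).symm

theorem exists_pos_mesh {d : ℕ} (hd : 1 ≤ d) {N : ℕ} (hN : 1 ≤ N) :
    ∃ ε : ℝ, 0 < ε ∧ 6 * d ^ (d + 3) * ε = 1 / N ∧ d ≤ (6 * d ^ (d + 4) * N : ℕ) * ε := by
  refine ⟨1 / (6 * d ^ (d + 3) * N), by positivity, by field_simp, ?_⟩
  push_cast
  field_simp
  exact (pow_succ' _ _).ge

theorem discretization_rotated_hyperrectangles_general (d : ℕ) (hd : 1 ≤ d) :
    ∃ N₀ : ℕ, ∀ N : ℕ, N₀ ≤ N → ∀ v : ℝ, 1 / (N : ℝ) ≤ v →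
      ∃ 𝔔 : Finset (Set (Fin d → ℝ)),
        𝔔.card ≤ N ^ (3 * d ^ 2) ∧
        (∀ B ∈ 𝔔,
          (∃ (R : Matrix (Fin d) (Fin d) ℝ) (s t : Fin d → ℝ),
            Rᵀ * R = 1 ∧ R.det = 1 ∧ (∀ i, 0 < s i) ∧ t ∈ Set.Icc (0 : Fin d → ℝ) 1 ∧
            B = (fun x => R.mulVec (fun i => s i * x i) + t) ''
              Set.Icc (-1 : Fin d → ℝ) 1) ∧
          volume B = ENNReal.ofReal v) ∧
        ∀ 𝒞 : Set (Fin d → ℝ), 𝒞 ⊆ Set.Icc 0 1 → IsCompact 𝒞 → Convex ℝ 𝒞 →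
          ENNReal.ofReal (2 ^ (d * (d + 1)) * v) ≤ volume 𝒞 → ∃ B ∈ 𝔔, B ⊆ 𝒞 := by
  classical
  have : NeZero d := ⟨Nat.one_le_iff_ne_zero.mp hd⟩
  have hc : 1 ≤ 6 * d ^ (d + 4) := Nat.one_le_iff_ne_zero.mpr (by positivity)
  refine ⟨(3 * (6 * d ^ (d + 4))) ^ (3 * d ^ 2 - 1), fun N hN v hNv => ?_⟩
  have hN₁ : 1 ≤ N := (Nat.one_le_pow _ _ (by positivity)).trans hN
  have hv : 0 < v := lt_of_lt_of_le (by positivity) hNv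
  obtain ⟨ε, hε, hεN, hL⟩ := exists_pos_mesh hd hN₁
  obtain ⟨F, hF, hcard, hnet⟩ := RotatedBox.exists_finset_admissible_net v hε hL
  refine ⟨F.image RotatedBox.toSet, ?_, ?_, fun K hK01 hK hconv hvol => ?_⟩
  · refine (Finset.card_image_le.trans hcard).trans ((two_mul_add_one_pow_le hc hN₁ hN).trans_eq ?_)
    rw [Nat.sub_add_cancel (by nlinarith)]
  · exact Finset.forall_mem_image.mpr fun B hB => ⟨⟨B.rotation, B.halfSide, B.center,
      B.transpose_mul_rotation, B.det_rotation, B.halfSide_pos, (hF hB).2.2, rfl⟩, (hF hB).1⟩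
  · obtain ⟨B, hB, hBK⟩ := RotatedBox.exists_admissible_forall_dist_coord_le_subset hK01 hK hconv
      hv hε.le (hεN.trans_le hNv) hvol
    obtain ⟨B', hB', hdist⟩ := hnet B hB
    exact ⟨B'.toSet, Finset.mem_image_of_mem _ hB', hBK B' (hF hB') hdist⟩

/-- **Discretization.** For `d ≥ 1`, `d̃ = d(d−1)/2`, `C(d) = 2^{d(d̃+2)} d^d`,
for all sufficiently large `N` and every volume `v` with `1/N ≤ v ≤ 1`, there is a family
`𝔔̄` of at most `N^{3d²}` rotated hyperrectangles `R·S·[−1,1]^d + t` (with `R ∈ SO(d)`,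
`S` positive diagonal, `t ∈ [0,1]^d`), each of volume exactly `v`, such that every convex
body `𝒞 ⊆ [0,1]^d` with `Vol(𝒞) ≥ C(d)·v` contains a member of `𝔔̄`. -/
theorem discretization_rotated_hyperrectangles (d : ℕ) (hd : 1 ≤ d) :
    ∃ N₀ : ℕ, ∀ N : ℕ, N₀ ≤ N → ∀ v : ℝ, 1 / (N : ℝ) ≤ v → v ≤ 1 →
      ∃ 𝔔 : Finset (Set (Fin d → ℝ)),
        𝔔.card ≤ N ^ (3 * d ^ 2) ∧
        (∀ B ∈ 𝔔,
          (∃ (R : Matrix (Fin d) (Fin d) ℝ) (s t : Fin d → ℝ),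
            Rᵀ * R = 1 ∧ R.det = 1 ∧ (∀ i, 0 < s i) ∧ t ∈ Set.Icc (0 : Fin d → ℝ) 1 ∧
            B = (fun x => R.mulVec (fun i => s i * x i) + t) ''
              Set.Icc (-1 : Fin d → ℝ) 1) ∧
          volume B = ENNReal.ofReal v) ∧
        ∀ 𝒞 : Set (Fin d → ℝ), 𝒞 ⊆ Set.Icc 0 1 → IsCompact 𝒞 → Convex ℝ 𝒞 →
          ENNReal.ofReal ((2 ^ (d * (d * (d - 1) / 2 + 2)) * d ^ d : ℕ) * v) ≤ volume 𝒞 →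
          ∃ B ∈ 𝔔, B ⊆ 𝒞 := by
  obtain ⟨N₀, hN₀⟩ := discretization_rotated_hyperrectangles_general d hd
  refine ⟨N₀, fun N hN v hNv _ => ?_⟩
  obtain ⟨𝔔, hcard, hbox, hsub⟩ := hN₀ N hN v hNv
  have hv : 0 ≤ v := le_trans (by positivity) hNv
  refine ⟨𝔔, hcard, hbox, fun 𝒞 h01 hcomp hconv hvol => hsub 𝒞 h01 hcomp hconv (le_trans ?_ hvol)⟩
  gcongr
  exact_mod_cast two_pow_mul_add_one_le hd
end
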